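/- The function α is strictly increasing in each variable on the positive quadrant: for all real y > 0 and 0 < x₁ < x₂ one has α(x₁,y) < α(x₂,y), and for all real x > 0 and 0 < y₁ < y₂ one has α(x,y₁) < α(x,y₂). -/

import Mathlib

/-- The auxiliary function `α(x,y) = -d₁(x,y)/d₀(x,y)` of the BDF3 analysis. -/
noncomputable def alphaF (x y : ℝ) : ℝ :=
  x*(x^2*y^2 + 4*x*y^2 + 3*y^2 + 2*x*y + 3*y + 1) /
    ((y + 1)*(3*x^2*y + 4*x*y + 2*x + y + 1))

/-- The function `α` is strictly increasing in each variable on the positive quadrant. -/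
theorem alpha_strict_mono :
    (∀ y x₁ x₂ : ℝ, 0 < y → 0 < x₁ → x₁ < x₂ → alphaF x₁ y < alphaF x₂ y) ∧
    (∀ x y₁ y₂ : ℝ, 0 < x → 0 < y₁ → y₁ < y₂ → alphaF x y₁ < alphaF x y₂) := by
  constructor
  · intro y a b hy ha hab
    have hb : 0 < b := ha.trans hab
    unfold alphaF
    rw [div_lt_div_iff₀ (by positivity) (by positivity), ← sub_pos]
    have h : 0 < (b - a) * ((y + 1) * (3*y^3*(a^2*b^2) + y^2*(4*y+2)*(a*b*(a+b))
        + y^2*(y+1)*(a^2+b^2) + (8*y^3+8*y^2+y)*(a*b)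
        + (4*y^2+2*y)*(y+1)*(a+b) + (3*y^2+3*y+1)*(y+1))) :=
      mul_pos (sub_pos.2 hab) (by positivity)
    linear_combination h
  · intro x a b hx ha hab
    have hb : 0 < b := ha.trans hab
    unfold alphaF
    rw [div_lt_div_iff₀ (by positivity) (by positivity), ← sub_pos]
    have h : 0 < (b - a) * (x * (a*b*((x^2+4*x+3)*(2*x+1) + (3*x^2+4*x+1)*(x^2+2*x))
        + (a+b)*(2*x^3+6*x^2+6*x+2) + (x^2+2*x+1))) :=
      mul_pos (sub_pos.2 hab) (by positivity)
    linear_combination h
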